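/- The set L of processes expressible as a difference of two supermartingales (equivalently, the sum of a supermartingale and a submartingale) is a Riesz space under the pointwise order: it is a vector space closed under pointwise minimum. -/

import Mathlib

open MeasureTheory Filter

/-- `X` is a difference of two supermartingales (equivalently, the sum of a
supermartingale and a submartingale). -/
def IsDiffSupermartingale {Ω : Type*} {m : MeasurableSpace Ω}
    (ℱ : MeasureTheory.Filtration ℕ m) (μ : MeasureTheory.Measure Ω)
    (X : ℕ → Ω → ℝ) : Prop :=
  ∃ A B : ℕ → Ω → ℝ, MeasureTheory.Supermartingale A ℱ μ ∧
    MeasureTheory.Supermartingale B ℱ μ ∧ X = A - B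

/-!
Supermartingales form a convex cone that is closed under pointwise minimum. In a vector lattice,
the differences of elements of such a cone form a Riesz subspace: clearing the subtracted terms,
`(a - b) ⊓ (c - d) = (a + d) ⊓ (c + b) - (b + d)` is again a difference of elements of the cone.
-/

theorem sub_inf_sub_eq {α : Type*} [Lattice α] [AddCommGroup α] [AddLeftMono α] (a b c d : α) :
    (a - b) ⊓ (c - d) = (a + d) ⊓ (c + b) - (b + d) := by
  rw [sub_eq_add_neg _ (b + d), inf_add]
  congr 1 <;> abel

section DifferenceSpace

variable {R V : Type*} [Ring R] [LinearOrder R] [IsOrderedRing R] [AddCommGroup V] [Module R V]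

/-- The subspace `C - C` of differences of elements of a pointed cone `C`, that is, the linear
span of `C`. -/
def differenceSpace (C : PointedCone R V) : Submodule R V where
  carrier := {x | ∃ a b, a ∈ C ∧ b ∈ C ∧ x = a - b}
  add_mem' := by
    rintro _ _ ⟨a, b, ha, hb, rfl⟩ ⟨c, d, hc, hd, rfl⟩
    exact ⟨a + c, b + d, add_mem ha hc, add_mem hb hd, sub_add_sub_comm a b c d⟩
  zero_mem' := ⟨0, 0, zero_mem C, zero_mem C, (sub_zero 0).symm⟩
  smul_mem' := by
    rintro r _ ⟨a, b, ha, hb, rfl⟩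
    rcases le_total 0 r with hr | hr
    · exact ⟨r • a, r • b, C.smul_mem hr ha, C.smul_mem hr hb, smul_sub r a b⟩
    · have hr' : 0 ≤ -r := neg_nonneg.2 hr
      refine ⟨-r • b, -r • a, C.smul_mem hr' hb, C.smul_mem hr' ha, ?_⟩
      rw [← smul_sub, neg_smul, ← smul_neg, neg_sub]

theorem inf_mem_differenceSpace [Lattice V] [AddLeftMono V] {C : PointedCone R V}
    (hC : InfClosed (C : Set V)) {x y : V} (hx : x ∈ differenceSpace C)
    (hy : y ∈ differenceSpace C) : x ⊓ y ∈ differenceSpace C := by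
  obtain ⟨a, b, ha, hb, rfl⟩ := hx
  obtain ⟨c, d, hc, hd, rfl⟩ := hy
  exact ⟨(a + d) ⊓ (c + b), b + d, hC (add_mem ha hd) (add_mem hc hb), add_mem hb hd,
    sub_inf_sub_eq a b c d⟩

end DifferenceSpace

section SupermartingaleCone

variable {ι Ω E : Type*} [Preorder ι] {m : MeasurableSpace Ω} [NormedAddCommGroup E]
  [NormedSpace ℝ E] [CompleteSpace E]

/-- The pointed cone of supermartingales with respect to `ℱ` and `μ`, inside the vector space of
all processes. -/
def supermartingaleCone [PartialOrder E] [IsOrderedAddMonoid E] [IsOrderedModule ℝ E]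
    (ℱ : Filtration ι m) (μ : Measure Ω) : PointedCone ℝ (ι → Ω → E) where
  carrier := {X | Supermartingale X ℱ μ}
  add_mem' hX hY := hX.add hY
  zero_mem' := (martingale_zero E ℱ μ).supermartingale
  smul_mem' c _ hX := hX.smul_nonneg c.2

variable [Lattice E] [HasSolidNorm E] [IsOrderedAddMonoid E] [IsOrderedModule ℝ E]
  {μ : Measure Ω} {ℱ : Filtration ι m} {X Y : ι → Ω → E}

theorem supermartingale_inf (hX : Supermartingale X ℱ μ) (hY : Supermartingale Y ℱ μ) :
    Supermartingale (X ⊓ Y) ℱ μ := by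
  simpa only [neg_sup, neg_neg] using (hX.neg.sup hY.neg).neg

theorem infClosed_supermartingaleCone :
    InfClosed (supermartingaleCone (E := E) ℱ μ : Set (ι → Ω → E)) :=
  fun _ hX _ hY ↦ supermartingale_inf hX hY

theorem isDiffSupermartingale_add_smul_inf_general [SigmaFiniteFiltration μ ℱ]
    (hX : X ∈ differenceSpace (supermartingaleCone ℱ μ))
    (hY : Y ∈ differenceSpace (supermartingaleCone ℱ μ)) :
    X + Y ∈ differenceSpace (supermartingaleCone ℱ μ) ∧
      (∀ c : ℝ, c • X ∈ differenceSpace (supermartingaleCone ℱ μ)) ∧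
      X ⊓ Y ∈ differenceSpace (supermartingaleCone ℱ μ) :=
  ⟨add_mem hX hY, fun c ↦ Submodule.smul_mem _ c hX,
    inf_mem_differenceSpace infClosed_supermartingaleCone hX hY⟩

end SupermartingaleCone

theorem isDiffSupermartingale_iff_mem_differenceSpace {Ω : Type*} {m : MeasurableSpace Ω}
    {μ : Measure Ω} {ℱ : Filtration ℕ m} {X : ℕ → Ω → ℝ} :
    IsDiffSupermartingale ℱ μ X ↔ X ∈ differenceSpace (supermartingaleCone ℱ μ) :=
  Iff.rfl

/-- The differences of supermartingales form a vector space closed under pointwise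
minimum, hence a Riesz space under the pointwise order. -/
theorem isDiffSupermartingale_add_smul_inf
    {Ω : Type*} {m : MeasurableSpace Ω} {μ : Measure Ω} [IsProbabilityMeasure μ]
    {ℱ : Filtration ℕ m} {X Y : ℕ → Ω → ℝ}
    (hX : IsDiffSupermartingale ℱ μ X) (hY : IsDiffSupermartingale ℱ μ Y) :
    IsDiffSupermartingale ℱ μ (X + Y) ∧
      (∀ c : ℝ, IsDiffSupermartingale ℱ μ (c • X)) ∧
      IsDiffSupermartingale ℱ μ (X ⊓ Y) := by
  simp only [isDiffSupermartingale_iff_mem_differenceSpace] at hX hY ⊢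
  exact isDiffSupermartingale_add_smul_inf_general hX hY
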